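/- For every ε > 0 and every P ∈ ℝ⁴, the function U_{ε,P}(x) = log(384·ε⁴/(ε² + ‖x−P‖²)⁴) is smooth on ℝ⁴, satisfies Δ(ΔU_{ε,P})(x) = exp(U_{ε,P}(x)) for every x ∈ ℝ⁴, and satisfies ∫_{ℝ⁴} exp(U_{ε,P}(x)) dx = 64π². -/

import Mathlib

open MeasureTheory

noncomputable section

/-- The Laplacian of `f : ℝ⁴ → ℝ` at `x`: the trace of the second derivative. -/
def lap (f : EuclideanSpace ℝ (Fin 4) → ℝ) (x : EuclideanSpace ℝ (Fin 4)) : ℝ :=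
  ∑ i : Fin 4,
    fderiv ℝ (fun y => fderiv ℝ f y (EuclideanSpace.single i (1:ℝ))) x
      (EuclideanSpace.single i (1:ℝ))

theorem lap_radial (e : ℝ) (he : 0 < e) (P : EuclideanSpace ℝ (Fin 4)) (g g1 g2 : ℝ → ℝ)
    (h1 : ∀ s, 0 < s → HasDerivAt g (g1 s) s) (h2 : ∀ s, 0 < s → HasDerivAt g1 (g2 s) s)
    (x : EuclideanSpace ℝ (Fin 4)) :
    lap (fun y => g (e + ‖y - P‖ ^ 2)) x
      = 4 * ‖x - P‖ ^ 2 * g2 (e + ‖x - P‖ ^ 2) + 8 * g1 (e + ‖x - P‖ ^ 2) := by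
  have hpos : ∀ y : EuclideanSpace ℝ (Fin 4), 0 < e + ‖y - P‖ ^ 2 := fun y => by positivity
  have hs : ∀ y : EuclideanSpace ℝ (Fin 4),
      HasFDerivAt (fun y => e + ‖y - P‖ ^ 2) (2 • (innerSL ℝ (y - P))) y := by
    intro y
    have := ((hasFDerivAt_id (𝕜 := ℝ) y).sub_const P).norm_sq.const_add e
    simpa using this
  have hfd : ∀ i : Fin 4,
      (fun y => fderiv ℝ (fun y => g (e + ‖y - P‖ ^ 2)) y (EuclideanSpace.single i (1:ℝ)))
        = fun y => g1 (e + ‖y - P‖ ^ 2) * (2 * (y i - P i)) := by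
    intro i
    funext y
    have := (h1 _ (hpos y)).comp_hasFDerivAt y (hs y)
    rw [show (fun y => g (e + ‖y - P‖ ^ 2)) = g ∘ (fun y => e + ‖y - P‖ ^ 2) from rfl,
      this.fderiv]
    simp [EuclideanSpace.inner_single_right]
  have hc : ∀ i : Fin 4, HasFDerivAt (fun y : EuclideanSpace ℝ (Fin 4) => 2 * (y i - P i))
      ((2:ℝ) • (EuclideanSpace.proj i : EuclideanSpace ℝ (Fin 4) →L[ℝ] ℝ)) x := by
    intro i
    exact (((EuclideanSpace.proj i : EuclideanSpace ℝ (Fin 4) →L[ℝ] ℝ).hasFDerivAt).sub_const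
      (P i)).const_mul 2
  have hn : ‖x - P‖ ^ 2 = ∑ i, (x i - P i) ^ 2 := by
    rw [EuclideanSpace.norm_sq_eq]; simp
  have key : ∀ i : Fin 4,
      fderiv ℝ (fun y => fderiv ℝ (fun y => g (e + ‖y - P‖ ^ 2)) y
        (EuclideanSpace.single i (1:ℝ))) x (EuclideanSpace.single i (1:ℝ))
      = 4 * g2 (e + ‖x - P‖ ^ 2) * (x i - P i) ^ 2 + 2 * g1 (e + ‖x - P‖ ^ 2) := by
    intro i
    rw [hfd i]
    have hg := (h2 _ (hpos x)).comp_hasFDerivAt x (hs x)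
    have := hg.mul (hc i)
    have h3 := this.fderiv
    rw [show (fun y : EuclideanSpace ℝ (Fin 4) => g1 (e + ‖y - P‖ ^ 2) * (2 * (y i - P i)))
      = (g1 ∘ fun y => e + ‖y - P‖ ^ 2) * (fun y => 2 * (y i - P i)) from rfl, h3]
    simp [EuclideanSpace.inner_single_right]
    ring
  unfold lap
  rw [Finset.sum_congr rfl (fun i _ => key i), Finset.sum_add_distrib, ← Finset.mul_sum, ← hn]
  simp
  ring

theorem radial_int (e : ℝ) (he : 0 < e) :
    ∫ r in Set.Ioi (0:ℝ), r ^ 3 * (384 * e ^ 2 / (e + r ^ 2) ^ 4) = 32 := by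
  have hpos : ∀ r : ℝ, 0 < e + r ^ 2 := fun r => by positivity
  have hd : ∀ r : ℝ, HasDerivAt
      (fun r : ℝ => 384 * e ^ 2 * (-(1 / 4) * ((e + r ^ 2) ^ 2)⁻¹ + e / 6 * ((e + r ^ 2) ^ 3)⁻¹))
      (r ^ 3 * (384 * e ^ 2 / (e + r ^ 2) ^ 4)) r := by
    intro r
    have hs : HasDerivAt (fun r : ℝ => e + r ^ 2) (2 * r) r := by
      simpa using (hasDerivAt_pow 2 r).const_add e
    have hr := (hpos r).ne'
    have := ((((hs.pow 2).inv (pow_ne_zero 2 hr)).const_mul (-(1 / 4) : ℝ)).add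
      (((hs.pow 3).inv (pow_ne_zero 3 hr)).const_mul (e / 6))).const_mul (384 * e ^ 2)
    refine this.congr_deriv ?_
    simp
    field_simp
    ring
  have ht : Filter.Tendsto (fun r : ℝ => e + r ^ 2) Filter.atTop Filter.atTop :=
    Filter.tendsto_atTop_add_const_left _ _ (Filter.tendsto_pow_atTop two_ne_zero)
  have hl : Filter.Tendsto
      (fun r : ℝ => 384 * e ^ 2 * (-(1 / 4) * ((e + r ^ 2) ^ 2)⁻¹ + e / 6 * ((e + r ^ 2) ^ 3)⁻¹))
      Filter.atTop (nhds 0) := by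
    have a2 := (((Filter.tendsto_pow_atTop (α := ℝ) two_ne_zero).comp ht).inv_tendsto_atTop).const_mul
      (-(1 / 4) : ℝ)
    have a3 := (((Filter.tendsto_pow_atTop (α := ℝ) three_ne_zero).comp ht).inv_tendsto_atTop).const_mul
      (e / 6)
    simpa using (a2.add a3).const_mul (384 * e ^ 2)
  rw [integral_Ioi_of_hasDerivAt_of_nonneg (hd 0).continuousAt.continuousWithinAt
    (fun r _ => hd r) (fun r hr => ?_) hl]
  · simp
    field_simp
    norm_num
  · have : (0:ℝ) < r := hr
    have := hpos r
    positivity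

/-- For every `ε > 0` and `P ∈ ℝ⁴`, the bubble
`U_{ε,P}(x) = log(384 ε⁴ / (ε² + ‖x−P‖²)⁴)` is smooth on `ℝ⁴`, solves `Δ²U = e^U`, and
`∫_{ℝ⁴} e^{U_{ε,P}} dx = 64π²`. -/
theorem bubble_family (ε : ℝ) (hε : 0 < ε) (P : EuclideanSpace ℝ (Fin 4)) :
    ContDiff ℝ (⊤ : ℕ∞)
      (fun x : EuclideanSpace ℝ (Fin 4) =>
        Real.log (384 * ε ^ 4 / (ε ^ 2 + ‖x - P‖ ^ 2) ^ 4)) ∧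
    (∀ x : EuclideanSpace ℝ (Fin 4),
      lap (lap (fun x : EuclideanSpace ℝ (Fin 4) =>
          Real.log (384 * ε ^ 4 / (ε ^ 2 + ‖x - P‖ ^ 2) ^ 4))) x
        = Real.exp (Real.log (384 * ε ^ 4 / (ε ^ 2 + ‖x - P‖ ^ 2) ^ 4))) ∧
    ∫ x : EuclideanSpace ℝ (Fin 4),
        Real.exp (Real.log (384 * ε ^ 4 / (ε ^ 2 + ‖x - P‖ ^ 2) ^ 4))
      = 64 * Real.pi ^ 2 := by
  have hpos : ∀ y : EuclideanSpace ℝ (Fin 4), 0 < ε ^ 2 + ‖y - P‖ ^ 2 := fun y => by positivity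
  have hq : ∀ y : EuclideanSpace ℝ (Fin 4), 0 < 384 * ε ^ 4 / (ε ^ 2 + ‖y - P‖ ^ 2) ^ 4 :=
    fun y => by have := hpos y; positivity
  refine ⟨?_, ?_, ?_⟩
  · refine ContDiff.log ?_ (fun y => (hq y).ne')
    refine contDiff_const.div ?_ (fun y => (pow_pos (hpos y) 4).ne')
    exact (contDiff_const.add ((contDiff_id.sub contDiff_const).norm_sq ℝ)).pow 4
  · intro x
    have e1 : lap (fun x : EuclideanSpace ℝ (Fin 4) =>
          Real.log (384 * ε ^ 4 / (ε ^ 2 + ‖x - P‖ ^ 2) ^ 4))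
        = fun y => (fun s : ℝ => -16 * s⁻¹ - 16 * ε ^ 2 * (s ^ 2)⁻¹) (ε ^ 2 + ‖y - P‖ ^ 2) := by
      funext y
      rw [lap_radial (ε ^ 2) (by positivity) P (fun s => Real.log (384 * ε ^ 4 / s ^ 4))
        (fun s => -4 * s⁻¹) (fun s => 4 * (s ^ 2)⁻¹)]
      · have := (hpos y).ne'
        dsimp only
        generalize hs : ε ^ 2 + ‖y - P‖ ^ 2 = s at *
        rw [show ‖y - P‖ ^ 2 = s - ε ^ 2 by rw [← hs]; ring]
        field_simp
        ring
      · intro s hs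
        have h := ((Real.hasDerivAt_log hs.ne').const_mul 4).const_sub (Real.log (384 * ε ^ 4))
        have h' := h.congr_of_eventuallyEq (f₁ := fun s => Real.log (384 * ε ^ 4 / s ^ 4)) (by
          filter_upwards [lt_mem_nhds hs] with t ht
          rw [Real.log_div (by positivity) (by positivity), Real.log_pow]
          norm_num)
        exact h'.congr_deriv (by ring)
      · intro s hs
        exact ((hasDerivAt_inv hs.ne').const_mul (-4)).congr_deriv (by ring)
    rw [e1, Real.exp_log (hq x), lap_radial (ε ^ 2) (by positivity) P
        (fun s : ℝ => -16 * s⁻¹ - 16 * ε ^ 2 * (s ^ 2)⁻¹)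
        (fun s => 16 * (s ^ 2)⁻¹ + 32 * ε ^ 2 * (s ^ 3)⁻¹)
        (fun s => -32 * (s ^ 3)⁻¹ - 96 * ε ^ 2 * (s ^ 4)⁻¹)]
    · have := (hpos x).ne'
      try dsimp only
      generalize hs : ε ^ 2 + ‖x - P‖ ^ 2 = s at *
      rw [show ‖x - P‖ ^ 2 = s - ε ^ 2 by rw [← hs]; ring]
      field_simp
      ring
    · intro s hs
      have hs' := hs.ne'
      refine (((hasDerivAt_inv hs').const_mul (-16)).sub
        (((hasDerivAt_pow 2 s).fun_inv (pow_ne_zero 2 hs')).const_mul (16 * ε ^ 2))).congr_deriv ?_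
      field_simp
      ring
    · intro s hs
      have hs' := hs.ne'
      refine ((((hasDerivAt_pow 2 s).fun_inv (pow_ne_zero 2 hs')).const_mul 16).add
        (((hasDerivAt_pow 3 s).fun_inv (pow_ne_zero 3 hs')).const_mul
          (32 * ε ^ 2))).congr_deriv ?_
      field_simp
      ring
  · simp_rw [fun y => Real.exp_log (hq y)]
    rw [integral_sub_right_eq_self
      (fun x : EuclideanSpace ℝ (Fin 4) => 384 * ε ^ 4 / (ε ^ 2 + ‖x‖ ^ 2) ^ 4) P,
      integral_fun_norm_addHaar volume (fun r => 384 * ε ^ 4 / (ε ^ 2 + r ^ 2) ^ 4)]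
    have h := radial_int (ε ^ 2) (by positivity)
    have hv : volume.real (Metric.ball (0 : EuclideanSpace ℝ (Fin 4)) 1) = Real.pi ^ 2 / 2 := by
      rw [Measure.real, InnerProductSpace.volume_ball_of_dim_even (k := 2) (by simp)]
      simp [ENNReal.toReal_ofReal (by positivity : 0 ≤ Real.pi ^ 2 / 2), Nat.factorial]
      try positivity
    simp only [finrank_euclideanSpace, Fintype.card_fin, hv, nsmul_eq_mul, smul_eq_mul]
    rw [show ∫ r in Set.Ioi (0:ℝ), r ^ (4 - 1) * (384 * ε ^ 4 / (ε ^ 2 + r ^ 2) ^ 4) = 32 by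
      rw [← h]
      congr 1
      funext r
      norm_num [← pow_mul]]
    push_cast
    ring

end
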